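/- Let q be an odd prime power and k a positive integer. For every ε > 0 there exists N = N(ε) such that for all n ≥ N, the proportion of μ ∈ 𝔛_n with v_2(d_μ) < v_2((n)_k) is less than ε: #{μ ∈ 𝔛_n : v_2(d_μ) < v_2((n)_k)} / |𝔛_n| < ε, where (n)_k = n!/(n−k)! is the falling factorial. -/

import Mathlib

/-- The `i`-th part (0-indexed, parts in weakly decreasing order) of the partition whose
multiset of parts is `lam`; `0` if `i` is at least the number of parts. -/
def partNth (lam : Multiset ℕ) (i : ℕ) : ℕ :=
  ((lam.sort (· ≤ ·)).reverse.getD i 0)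

/-- The `j`-th part (0-indexed) of the conjugate partition: the number of parts `> j`. -/
def conjNth (lam : Multiset ℕ) (j : ℕ) : ℕ :=
  (lam.filter (fun m => j < m)).card

/-- The cells `(i, j)` (0-indexed) of the Young diagram of `lam`. -/
def cellsOf (lam : Multiset ℕ) : Finset (ℕ × ℕ) :=
  (Finset.range (Multiset.card lam) ×ˢ Finset.range lam.sum).filter
    (fun c => c.2 < partNth lam c.1)

/-- The hook length of the cell `c = (i, j)` of `lam`:
`(λᵢ − j) + (λ'ⱼ − i) − 1`. -/
def hookLen (lam : Multiset ℕ) (c : ℕ × ℕ) : ℕ :=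
  (partNth lam c.1 - c.2) + (conjNth lam c.2 - c.1) - 1

/-- The product of all hook lengths of `lam`. -/
def hookProd (lam : Multiset ℕ) : ℕ :=
  ∏ c ∈ cellsOf lam, hookLen lam c

/-- `α(λ) = Σᵢ (i − 1)·λᵢ` (1-indexed), i.e. `Σᵢ i·λᵢ` for the 0-indexed parts. -/
def alphaStat (lam : Multiset ℕ) : ℕ :=
  ∑ i ∈ Finset.range (Multiset.card lam), i * partNth lam i

/-- `𝔣_λ = n! / ∏_{h ∈ H(λ)} |h|`, the degree of the irreducible character of `S_n`
indexed by `λ`, as a rational number. -/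
def fDeg (lam : Multiset ℕ) : ℚ :=
  (Nat.factorial lam.sum : ℚ) / (hookProd lam : ℚ)

/-- `d_λ(x) = x^{α(λ)} · ∏_{i=1}^{n} (x^i − 1) / ∏_{h ∈ H(λ)} (x^{|h|} − 1)`. -/
def dDeg (lam : Multiset ℕ) (x : ℕ) : ℚ :=
  (x : ℚ) ^ alphaStat lam * (∏ i ∈ Finset.Icc 1 lam.sum, ((x : ℚ) ^ i - 1)) /
    ∏ c ∈ cellsOf lam, ((x : ℚ) ^ hookLen lam c - 1)
/-- `μ` is a member of `𝔛_n`: a finitely supported assignment of a partition (given by its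
multiset of positive parts) to each monic irreducible polynomial `f ≠ x` over `F`, such that
`Σ_f |μ(f)|·deg f = n`. -/
def IsXn (F : Type*) [Field F] (n : ℕ) (μ : Polynomial F →₀ Multiset ℕ) : Prop :=
  (∀ f ∈ μ.support, f.Monic ∧ Irreducible f ∧ f ≠ Polynomial.X) ∧
  (∀ f : Polynomial F, ∀ m ∈ μ f, 0 < m) ∧
  (μ.sum fun f lam => lam.sum * f.natDegree) = n

/-- `a_μ = ∏_{i=1}^{n} (q^i − 1) / ∏_{f ∈ Φ} ∏_{i=1}^{|μ(f)|} (q^{d(f)·i} − 1)`. -/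
noncomputable def aMu (q : ℕ) {F : Type*} [Field F] (n : ℕ)
    (μ : Polynomial F →₀ Multiset ℕ) : ℚ :=
  (∏ i ∈ Finset.Icc 1 n, ((q : ℚ) ^ i - 1)) /
    ∏ f ∈ μ.support, ∏ i ∈ Finset.Icc 1 (μ f).sum, ((q : ℚ) ^ (f.natDegree * i) - 1)

/-- `ψ_m(x) = ∏_{i=1}^{m} (x^i − 1)`. -/
def psiPoly (m : ℕ) (x : ℚ) : ℚ := ∏ i ∈ Finset.Icc 1 m, (x ^ i - 1)

/-- `H(λ, x) = x^{α(λ)} / ∏_{h ∈ H(λ)} (x^{|h|} − 1)`. -/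
def hFactor (lam : Multiset ℕ) (x : ℚ) : ℚ :=
  x ^ alphaStat lam / ∏ c ∈ cellsOf lam, (x ^ hookLen lam c - 1)

/-- `d_μ = ψ_n(q) · ∏_{f ∈ Φ} H(μ(f), q^{d(f)})`, the degree of the irreducible character of
`GL(n, q)` indexed by `μ`, as a rational number. -/
noncomputable def dMu (q : ℕ) {F : Type*} [Field F] (n : ℕ)
    (μ : Polynomial F →₀ Multiset ℕ) : ℚ :=
  psiPoly n (q : ℚ) * ∏ f ∈ μ.support, hFactor (μ f) ((q : ℚ) ^ f.natDegree)

/-!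
Each hook in the denominator of `d_μ` has length at most `n` and so, by lifting the exponent,
costs only `O(log n)` of `ℓ`-adic valuation, whereas `ψ_n(q)` has valuation at least
`⌊n / (ℓ - 1)⌋` by Fermat. Hence `v_ℓ(d_μ)` can be small only if the number of hooks
`Σ_f |μ(f)|` is of order `n / log n`.

On average that number is only `O(log n)`, so Markov's inequality applies. Indeed, removing `j`
parts `i` from `μ(f)` is injective, and multiplying the polynomials attached to the parts `1` and
appending coefficients to the product shows `|𝔛_n| q^m ≤ |𝔛_{n+m+1}|`. Thus `μ(f)` contains `j`
parts `i` for a proportion at most `q^{1 - ij deg f}` of the `μ`, and the mean of `|μ(f)|` is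
`O(q^{-deg f})`. As there are at most `q^d / d` monic irreducible polynomials of degree `d`,
summing over `f` gives a harmonic sum.
-/

open Polynomial UniqueFactorizationMonoid Finset

section Partition

/-- The parts of the partition `lam` in weakly decreasing order; `partNth` reads off its entries. -/
def descParts (lam : Multiset ℕ) : List ℕ := (lam.sort (· ≤ ·)).reverse

variable (lam : Multiset ℕ)

lemma coe_descParts : (descParts lam : Multiset ℕ) = lam := by
  rw [descParts, Multiset.coe_reverse, Multiset.sort_eq]

lemma pairwise_ge_descParts : (descParts lam).Pairwise (· ≥ ·) :=
  List.pairwise_reverse.2 (Multiset.pairwise_sort lam (· ≤ ·))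

lemma length_descParts : (descParts lam).length = lam.card := by
  rw [← Multiset.coe_card, coe_descParts]

variable {lam}

lemma partNth_eq_getElem {i : ℕ} (hi : i < (descParts lam).length) :
    partNth lam i = (descParts lam)[i] :=
  List.getD_eq_getElem _ _ hi

lemma partNth_eq_zero {i : ℕ} (hi : (descParts lam).length ≤ i) : partNth lam i = 0 :=
  List.getD_eq_default _ _ hi

lemma partNth_mem {i : ℕ} (hi : i < (descParts lam).length) : partNth lam i ∈ lam := by
  have hmem := Multiset.mem_coe.2 (List.getElem_mem hi)
  rwa [coe_descParts, ← partNth_eq_getElem hi] at hmem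

lemma lt_length_descParts_of_partNth_pos {i : ℕ} (h : 0 < partNth lam i) :
    i < (descParts lam).length :=
  not_le.1 fun hi => h.ne' (partNth_eq_zero hi)

variable (lam) in
lemma sum_range_partNth : ∑ i ∈ Finset.range lam.card, partNth lam i = lam.sum := by
  calc ∑ i ∈ Finset.range lam.card, partNth lam i
      = ∑ i : Fin (descParts lam).length, (descParts lam)[i] := by
        rw [← length_descParts, Finset.sum_range]
        exact Finset.sum_congr rfl fun i _ => partNth_eq_getElem i.2
    _ = (descParts lam : Multiset ℕ).sum := by
        rw [Multiset.sum_coe]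
        exact Fin.sum_univ_getElem (descParts lam)
    _ = lam.sum := by rw [coe_descParts]

lemma partNth_le_sum (i : ℕ) : partNth lam i ≤ lam.sum := by
  by_cases hi : i < (descParts lam).length
  · exact Multiset.single_le_sum (fun _ _ => Nat.zero_le _) _ (partNth_mem hi)
  · simp [partNth_eq_zero (not_lt.1 hi)]

variable (lam) in
lemma card_cellsOf : (cellsOf lam).card = lam.sum := by
  rw [cellsOf, Finset.card_filter, Finset.sum_product, ← sum_range_partNth lam]
  refine Finset.sum_congr rfl fun i _ => ?_
  have hrow : {j ∈ Finset.range lam.sum | j < partNth lam i} = Finset.range (partNth lam i) := by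
    ext j
    have := partNth_le_sum (lam := lam) i
    simp only [Finset.mem_filter, Finset.mem_range]
    omega
  rw [sum_range_partNth, ← Finset.card_filter, hrow, Finset.card_range]

lemma lt_conjNth_of_lt_partNth {i j : ℕ} (h : j < partNth lam i) : i < conjNth lam j := by
  have hi := lt_length_descParts_of_partNth_pos (Nat.zero_lt_of_lt h)
  have hfirst : ((descParts lam).take (i + 1) : Multiset ℕ) ≤ lam.filter (j < ·) := by
    refine Multiset.le_filter.2 ⟨?_, fun a ha => ?_⟩
    · conv_rhs => rw [← coe_descParts lam]
      exact (List.take_sublist _ _).subperm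
    · obtain ⟨k, hk, rfl⟩ := List.mem_take_iff_getElem.1 (Multiset.mem_coe.1 ha)
      rw [partNth_eq_getElem hi] at h
      exact h.trans_le <| (pairwise_ge_descParts lam).sortedGE.getElem_ge_getElem_of_le
        (by omega)
  have hcard := Multiset.card_le_card hfirst
  rw [Multiset.coe_card, List.length_take] at hcard
  unfold conjNth
  omega

lemma hookLen_pos {c : ℕ × ℕ} (hc : c ∈ cellsOf lam) : 0 < hookLen lam c := by
  have harm : c.2 < partNth lam c.1 := (Finset.mem_filter.1 hc).2
  have hleg := lt_conjNth_of_lt_partNth harm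
  unfold hookLen
  omega

lemma card_le_sum_of_pos (hpos : ∀ m ∈ lam, 0 < m) : lam.card ≤ lam.sum := by
  simpa using Multiset.card_nsmul_le_sum (s := lam) (a := 1) hpos

lemma mul_le_sum_of_le_count {i j : ℕ} (h : j ≤ lam.count i) :
    i * j ≤ lam.sum := by
  obtain ⟨rest, rfl⟩ := Multiset.le_iff_exists_add.1 (Multiset.le_count_iff_replicate_le.1 h)
  rw [Multiset.sum_add, Multiset.sum_replicate, smul_eq_mul, mul_comm]
  exact Nat.le_add_right _ _

lemma mem_add_card_le_sum_add_one (hpos : ∀ m ∈ lam, 0 < m) {a : ℕ} (ha : a ∈ lam) :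
    a + lam.card ≤ lam.sum + 1 := by
  obtain ⟨t, rfl⟩ := Multiset.exists_cons_of_mem ha
  have := card_le_sum_of_pos fun m hm => hpos m (Multiset.mem_cons_of_mem hm)
  rw [Multiset.card_cons, Multiset.sum_cons]
  omega

lemma hookLen_le_sum (hpos : ∀ m ∈ lam, 0 < m) {c : ℕ × ℕ} (hc : c ∈ cellsOf lam) :
    hookLen lam c ≤ lam.sum := by
  have harm : c.2 < partNth lam c.1 := (Finset.mem_filter.1 hc).2
  have hhook := mem_add_card_le_sum_add_one hpos
    (partNth_mem (lt_length_descParts_of_partNth_pos (Nat.zero_lt_of_lt harm)))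
  have hconj : conjNth lam c.2 ≤ lam.card := Multiset.card_le_card (Multiset.filter_le _ _)
  unfold hookLen
  omega

end Partition

section Valuation

variable {ℓ q : ℕ}

lemma padicValRat_prod [Fact ℓ.Prime] {ι : Type*} {s : Finset ι} {g : ι → ℚ}
    (h : ∀ i ∈ s, g i ≠ 0) :
    padicValRat ℓ (∏ i ∈ s, g i) = ∑ i ∈ s, padicValRat ℓ (g i) := by
  classical
  induction s using Finset.induction_on with
  | empty => simp
  | insert a s ha ih =>
    obtain ⟨hga, hgs⟩ := Finset.forall_mem_insert _ _ _ |>.1 h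
    rw [Finset.prod_insert ha, Finset.sum_insert ha,
      padicValRat.mul hga (Finset.prod_ne_zero_iff.2 hgs), ih hgs]

lemma natCast_pow_sub_one (hq : 1 ≤ q) (m : ℕ) : (q : ℚ) ^ m - 1 = ((q ^ m - 1 : ℕ) : ℚ) := by
  push_cast [Nat.one_le_pow m q hq]
  rfl

lemma pow_sub_one_ne_zero (hq : 1 < q) {m : ℕ} (hm : m ≠ 0) : q ^ m - 1 ≠ 0 :=
  (Nat.sub_pos_of_lt (Nat.one_lt_pow hm hq)).ne'

lemma natCast_pow_sub_one_ne_zero (hq : 1 < q) {m : ℕ} (hm : m ≠ 0) : (q : ℚ) ^ m - 1 ≠ 0 := by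
  rw [natCast_pow_sub_one hq.le]
  exact_mod_cast pow_sub_one_ne_zero hq hm

variable [hℓ : Fact ℓ.Prime]

lemma prime_dvd_pow_sub_one (hℓq : ¬ ℓ ∣ q) {m : ℕ} (hm : ℓ - 1 ∣ m) : ℓ ∣ q ^ m - 1 := by
  have hfermat : q ^ (ℓ - 1) ≡ 1 [MOD ℓ] := by
    rw [← Nat.totient_prime hℓ.out]
    exact Nat.ModEq.pow_totient ((hℓ.out.coprime_iff_not_dvd.2 hℓq).symm)
  obtain ⟨c, rfl⟩ := hm
  refine (Nat.modEq_iff_dvd' (Nat.one_le_pow _ _ ?_)).1 ?_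
  · exact Nat.pos_of_ne_zero fun h => hℓq (h ▸ dvd_zero ℓ)
  · simpa [pow_mul] using (hfermat.pow c).symm

lemma padicValNat_le_of_dvd {a b : ℕ} (hb : b ≠ 0) (h : a ∣ b) :
    padicValNat ℓ a ≤ padicValNat ℓ b :=
  (padicValNat_dvd_iff_le hb).1 (pow_padicValNat_dvd.trans h)

-- Squaring `x` makes the lifting-the-exponent bound hold for `ℓ = 2` as well.
lemma padicValNat_pow_sub_one_le_of_dvd {x : ℕ} (hx : 1 < x) (hℓx : ℓ ∣ x - 1) {m : ℕ}
    (hm : m ≠ 0) :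
    padicValNat ℓ (x ^ m - 1) ≤ padicValNat ℓ (x ^ 2 - 1) + padicValNat ℓ m := by
  have hndvd : ¬ ℓ ∣ x := fun h => by
    have := (Nat.dvd_sub_iff_right hx.le h).1 hℓx
    exact hℓ.out.one_lt.ne' (Nat.dvd_one.1 this)
  rcases hℓ.out.eq_two_or_odd' with rfl | hodd
  · have hlte := padicValNat.pow_two_sub_one hx hndvd (mul_ne_zero two_ne_zero hm) (by simp)
    have hsq : x ^ 2 - 1 = (x + 1) * (x - 1) := by simpa using Nat.sq_sub_sq x 1
    have hmono := padicValNat_le_of_dvd (ℓ := 2)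
      (pow_sub_one_ne_zero hx (mul_ne_zero hm two_ne_zero))
      (Nat.pow_sub_one_dvd_pow_sub_one x (dvd_mul_right m 2))
    rw [padicValNat.mul two_ne_zero hm, padicValNat.self one_lt_two] at hlte
    rw [mul_comm m 2] at hmono
    rw [hsq, padicValNat.mul (by omega) (by omega)]
    omega
  · have hlte := padicValNat.pow_sub_pow hodd hx hℓx hndvd hm
    have hmono := padicValNat_le_of_dvd (ℓ := ℓ) (pow_sub_one_ne_zero hx two_ne_zero)
      (Nat.sub_one_dvd_pow_sub_one x 2)
    rw [one_pow] at hlte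
    omega

lemma padicValNat_pow_sub_one_le (hq : 1 < q) (hℓq : ¬ ℓ ∣ q) {m : ℕ} (hm : m ≠ 0) :
    padicValNat ℓ (q ^ m - 1) ≤ padicValNat ℓ (q ^ (2 * (ℓ - 1)) - 1) + Nat.log ℓ m := by
  have hℓ1 : ℓ - 1 ≠ 0 := Nat.sub_ne_zero_of_lt hℓ.out.one_lt
  calc padicValNat ℓ (q ^ m - 1)
      ≤ padicValNat ℓ ((q ^ (ℓ - 1)) ^ m - 1) := by
        rw [← pow_mul, mul_comm]
        exact padicValNat_le_of_dvd (pow_sub_one_ne_zero hq (mul_ne_zero hm hℓ1))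
          (Nat.pow_sub_one_dvd_pow_sub_one q (dvd_mul_right m (ℓ - 1)))
    _ ≤ padicValNat ℓ ((q ^ (ℓ - 1)) ^ 2 - 1) + padicValNat ℓ m :=
        padicValNat_pow_sub_one_le_of_dvd (Nat.one_lt_pow hℓ1 hq)
          (prime_dvd_pow_sub_one hℓq dvd_rfl) hm
    _ ≤ padicValNat ℓ (q ^ (2 * (ℓ - 1)) - 1) + Nat.log ℓ m := by
        rw [← pow_mul, mul_comm (ℓ - 1)]
        gcongr
        exact padicValNat_le_nat_log m

lemma psiPoly_ne_zero (hq : 1 < q) (n : ℕ) : psiPoly n (q : ℚ) ≠ 0 :=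
  Finset.prod_ne_zero_iff.2 fun _ hi =>
    natCast_pow_sub_one_ne_zero hq (Nat.one_le_iff_ne_zero.1 (Finset.mem_Icc.1 hi).1)

lemma div_le_padicValRat_psiPoly (hq : 1 < q) (hℓq : ¬ ℓ ∣ q) (n : ℕ) :
    ((n / (ℓ - 1) : ℕ) : ℤ) ≤ padicValRat ℓ (psiPoly n (q : ℚ)) := by
  have hne : ∀ i ∈ Finset.Icc 1 n, i ≠ 0 := fun i hi => by
    have := (Finset.mem_Icc.1 hi).1
    omega
  rw [psiPoly, padicValRat_prod fun i hi => natCast_pow_sub_one_ne_zero hq (hne i hi)]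
  simp only [natCast_pow_sub_one hq.le, padicValRat.of_nat]
  norm_cast
  calc n / (ℓ - 1) = ∑ i ∈ Finset.Icc 1 n, if ℓ - 1 ∣ i then 1 else 0 := by
        rw [← Finset.card_filter]
        exact (Nat.Ioc_filter_dvd_card_eq_div n (ℓ - 1)).symm
    _ ≤ ∑ i ∈ Finset.Icc 1 n, padicValNat ℓ (q ^ i - 1) := by
        refine Finset.sum_le_sum fun i hi => ?_
        split_ifs with hdvd
        · exact one_le_padicValNat_of_dvd (pow_sub_one_ne_zero hq (hne i hi))
            (prime_dvd_pow_sub_one hℓq hdvd)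
        · exact Nat.zero_le _

variable {lam : Multiset ℕ} {d : ℕ}

lemma pow_pow_hookLen_sub_one_ne_zero (hq : 1 < q) (hd : d ≠ 0) {c : ℕ × ℕ}
    (hc : c ∈ cellsOf lam) : ((q : ℚ) ^ d) ^ hookLen lam c - 1 ≠ 0 := by
  rw [← pow_mul]
  exact natCast_pow_sub_one_ne_zero hq (mul_ne_zero hd (hookLen_pos hc).ne')

lemma hFactor_ne_zero (hq : 1 < q) (hd : d ≠ 0) : hFactor lam ((q : ℚ) ^ d) ≠ 0 := by
  have hq0 : (q : ℚ) ≠ 0 := by exact_mod_cast (by omega : q ≠ 0)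
  exact div_ne_zero (pow_ne_zero _ (pow_ne_zero _ hq0))
    (Finset.prod_ne_zero_iff.2 fun _ hc => pow_pow_hookLen_sub_one_ne_zero hq hd hc)

lemma padicValRat_hFactor (hq : 1 < q) (hℓq : ¬ ℓ ∣ q) (hd : d ≠ 0) :
    padicValRat ℓ (hFactor lam ((q : ℚ) ^ d)) =
      -∑ c ∈ cellsOf lam, (padicValNat ℓ (q ^ (d * hookLen lam c) - 1) : ℤ) := by
  have hq0 : (q : ℚ) ≠ 0 := by exact_mod_cast (by omega : q ≠ 0)
  have hvalq : padicValRat ℓ (q : ℚ) = 0 := by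
    rw [padicValRat.of_nat, padicValNat.eq_zero_of_not_dvd hℓq, Nat.cast_zero]
  have hcells : ∀ c ∈ cellsOf lam, ((q : ℚ) ^ d) ^ hookLen lam c - 1 ≠ 0 :=
    fun _ hc => pow_pow_hookLen_sub_one_ne_zero hq hd hc
  rw [hFactor, padicValRat.div (pow_ne_zero _ (pow_ne_zero _ hq0))
    (Finset.prod_ne_zero_iff.2 hcells), padicValRat_prod hcells, padicValRat.pow,
    padicValRat.pow, hvalq]
  simp only [← pow_mul, natCast_pow_sub_one hq.le, padicValRat.of_nat, mul_zero, zero_sub]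

lemma neg_sum_mul_le_padicValRat_hFactor (hq : 1 < q) (hℓq : ¬ ℓ ∣ q) (hd : d ≠ 0)
    (hpos : ∀ m ∈ lam, 0 < m) {n : ℕ} (hn : lam.sum * d ≤ n) :
    -((lam.sum * (padicValNat ℓ (q ^ (2 * (ℓ - 1)) - 1) + Nat.log ℓ n) : ℕ) : ℤ) ≤
      padicValRat ℓ (hFactor lam ((q : ℚ) ^ d)) := by
  rw [padicValRat_hFactor hq hℓq hd, neg_le_neg_iff, ← card_cellsOf, ← smul_eq_mul]
  norm_cast
  refine Finset.sum_le_card_nsmul _ _ _ fun c hc => ?_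
  have hhook : d * hookLen lam c ≤ n := by
    rw [mul_comm]
    exact (Nat.mul_le_mul_right d (hookLen_le_sum hpos hc)).trans hn
  exact (padicValNat_pow_sub_one_le hq hℓq (mul_ne_zero hd (hookLen_pos hc).ne')).trans
    (Nat.add_le_add_left (Nat.log_mono_right hhook) _)

end Valuation

section Weight

variable {F : Type*} [Field F]

/-- `f` belongs to the set `Φ` of monic irreducible polynomials other than `X`. -/
def InPhi (f : F[X]) : Prop := f.Monic ∧ Irreducible f ∧ f ≠ X

/-- The weight `Σ_f |μ(f)|·deg f`, so that `𝔛_n` consists of the `μ` of weight `n`. -/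
noncomputable def weight (μ : F[X] →₀ Multiset ℕ) : ℕ :=
  μ.sum fun f lam => lam.sum * f.natDegree

/-- The total size `Σ_f |μ(f)|`, i.e. the number of hooks contributing to the denominator
of `d_μ`. -/
def totalSize (μ : F[X] →₀ Multiset ℕ) : ℕ := ∑ f ∈ μ.support, (μ f).sum

lemma weight_add (μ ν : F[X] →₀ Multiset ℕ) : weight (μ + ν) = weight μ + weight ν :=
  Finsupp.sum_add_index' (by simp) (by simp [add_mul])

lemma weight_single (f : F[X]) (lam : Multiset ℕ) :
    weight (Finsupp.single f lam) = lam.sum * f.natDegree :=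
  Finsupp.sum_single_index (by simp)

lemma sum_mul_natDegree_le_weight (μ : F[X] →₀ Multiset ℕ) (f : F[X]) :
    (μ f).sum * f.natDegree ≤ weight μ := by
  by_cases hf : f ∈ μ.support
  · exact Finset.single_le_sum (f := fun f => (μ f).sum * f.natDegree) (fun _ _ => Nat.zero_le _) hf
  · simp [Finsupp.notMem_support_iff.1 hf]

variable {n : ℕ} {μ : F[X] →₀ Multiset ℕ}

lemma isXn_iff : IsXn F n μ ↔
    (∀ f ∈ μ.support, InPhi f) ∧ (∀ f, ∀ m ∈ μ f, 0 < m) ∧ weight μ = n := Iff.rfl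

lemma isXn_of_le {ν : F[X] →₀ Multiset ℕ} (hμ : IsXn F n μ) (h : ν ≤ μ) :
    IsXn F (weight ν) ν := by
  refine isXn_iff.2 ⟨fun f hf => hμ.1 f ?_, fun f m hm => hμ.2.1 f m ?_, rfl⟩
  · exact Finsupp.support_mono h hf
  · exact Multiset.mem_of_le (h f) hm

lemma isXn_of_isXn_add_single {f : F[X]} {lam : Multiset ℕ}
    (h : IsXn F (n + lam.sum * f.natDegree) (μ + Finsupp.single f lam)) : IsXn F n μ := by
  have hweight : weight μ = n := by
    have := (isXn_iff.1 h).2.2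
    rw [weight_add, weight_single] at this
    omega
  exact hweight ▸ isXn_of_le h (le_add_of_nonneg_right fun _ => Multiset.zero_le _)

lemma sum_mul_natDegree_le (hμ : IsXn F n μ) (f : F[X]) : (μ f).sum * f.natDegree ≤ n :=
  (sum_mul_natDegree_le_weight μ f).trans_eq hμ.2.2

lemma sum_le_of_natDegree_pos (hμ : IsXn F n μ) {f : F[X]} (hf : 0 < f.natDegree) :
    (μ f).sum ≤ n :=
  (Nat.le_mul_of_pos_right _ hf).trans (sum_mul_natDegree_le hμ f)

lemma natDegree_mem_Icc (hμ : IsXn F n μ) {f : F[X]} (hf : f ∈ μ.support) :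
    f.natDegree ∈ Icc 1 n := by
  have hsize : 0 < (μ f).sum := by
    obtain ⟨m, hm⟩ := Multiset.exists_mem_of_ne_zero (Finsupp.mem_support_iff.1 hf)
    exact (hμ.2.1 f m hm).trans_le (Multiset.single_le_sum (fun _ _ => Nat.zero_le _) m hm)
  exact Finset.mem_Icc.2 ⟨(hμ.1 f hf).2.1.natDegree_pos,
    (Nat.le_mul_of_pos_left _ hsize).trans (sum_mul_natDegree_le hμ f)⟩

lemma sub_le_padicValRat_dMu {ℓ q : ℕ} [Fact ℓ.Prime] (hq : 1 < q) (hℓq : ¬ ℓ ∣ q)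
    (hμ : IsXn F n μ) :
    ((n / (ℓ - 1) : ℕ) : ℤ) -
        (totalSize μ * (padicValNat ℓ (q ^ (2 * (ℓ - 1)) - 1) + Nat.log ℓ n) : ℕ) ≤
      padicValRat ℓ (dMu q n μ) := by
  have hdeg : ∀ f ∈ μ.support, f.natDegree ≠ 0 := fun f hf => (hμ.1 f hf).2.1.natDegree_pos.ne'
  have hne : ∀ f ∈ μ.support, hFactor (μ f) ((q : ℚ) ^ f.natDegree) ≠ 0 :=
    fun f hf => hFactor_ne_zero hq (hdeg f hf)
  rw [dMu, padicValRat.mul (psiPoly_ne_zero hq n) (Finset.prod_ne_zero_iff.2 hne),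
    padicValRat_prod hne, sub_eq_add_neg]
  refine add_le_add (div_le_padicValRat_psiPoly hq hℓq n) ?_
  rw [totalSize, Finset.sum_mul, Nat.cast_sum, ← Finset.sum_neg_distrib]
  exact Finset.sum_le_sum fun f hf => neg_sum_mul_le_padicValRat_hFactor hq hℓq (hdeg f hf)
    (hμ.2.1 f) (sum_mul_natDegree_le hμ f)

end Weight

section Finiteness

variable {F : Type*} [Field F]

lemma le_nsmul_range {n : ℕ} {lam : Multiset ℕ} (hpos : ∀ m ∈ lam, 0 < m) (hn : lam.sum ≤ n) :
    lam ≤ n • Multiset.range (n + 1) := by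
  refine Multiset.le_iff_count.2 fun m => ?_
  by_cases hm : m ∈ lam
  · have hmn : m ≤ n := (Multiset.single_le_sum (fun _ _ => Nat.zero_le _) m hm).trans hn
    have hcount : lam.count m ≤ n :=
      (Multiset.count_le_card _ _).trans ((card_le_sum_of_pos hpos).trans hn)
    rw [Multiset.count_nsmul, Multiset.count_eq_one_of_mem (Multiset.nodup_range _)
      (Multiset.mem_range.2 (Nat.lt_succ_of_le hmn)), mul_one]
    exact hcount
  · simp [Multiset.count_eq_zero_of_notMem hm]

variable [Finite F]

lemma finite_degreeLT (m : ℕ) : Finite (degreeLT F m) :=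
  Finite.of_equiv _ (degreeLTEquiv F m).toEquiv.symm

variable (F) in
lemma finite_setOf_isXn (n : ℕ) : {μ | IsXn F n μ}.Finite := by
  classical
  have := finite_degreeLT (F := F) (n + 1)
  have hlow : {f : F[X] | f.natDegree ≤ n}.Finite :=
    (Set.toFinite (degreeLT F (n + 1) : Set F[X])).subset fun f hf =>
      mem_degreeLT.2 (degree_le_natDegree.trans_lt (Nat.cast_lt.2 (Nat.lt_succ_of_le hf)))
  let bound : F[X] →₀ Multiset ℕ :=
    Finsupp.indicator hlow.toFinset fun _ _ => n • Multiset.range (n + 1)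
  refine (Set.finite_Icc 0 bound).subset fun μ hμ => ⟨fun _ => Multiset.zero_le _, fun f => ?_⟩
  by_cases hf : f ∈ μ.support
  · obtain ⟨hpos, hdeg⟩ := Finset.mem_Icc.1 (natDegree_mem_Icc hμ hf)
    rw [Finsupp.indicator_of_mem (hlow.mem_toFinset.2 hdeg)]
    exact le_nsmul_range (hμ.2.1 f) (sum_le_of_natDegree_pos hμ hpos)
  · rw [Finsupp.notMem_support_iff.1 hf]
    exact Multiset.zero_le _

variable (F) in
/-- The finite set `𝔛_n` itself. -/
noncomputable def xnFinset (n : ℕ) : Finset (F[X] →₀ Multiset ℕ) :=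
  (finite_setOf_isXn F n).toFinset

lemma mem_xnFinset {n : ℕ} {μ : F[X] →₀ Multiset ℕ} : μ ∈ xnFinset F n ↔ IsXn F n μ :=
  (finite_setOf_isXn F n).mem_toFinset

lemma card_filter_le_count_le (n i j : ℕ) (f : F[X]) :
    #{μ ∈ xnFinset F (n + i * j * f.natDegree) | j ≤ (μ f).count i} ≤ #(xnFinset F n) := by
  classical
  let block : F[X] →₀ Multiset ℕ := Finsupp.single f (Multiset.replicate j i)
  have hblock : ∀ {μ : F[X] →₀ Multiset ℕ}, j ≤ (μ f).count i → μ - block + block = μ :=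
    fun h => tsub_add_cancel_of_le <|
      Finsupp.single_le_iff.2 (Multiset.le_count_iff_replicate_le.1 h)
  refine Finset.card_le_card_of_injOn (· - block) (fun μ hμ => ?_) fun μ hμ ν hν h => ?_
  · obtain ⟨hμ, hcount⟩ := Finset.mem_filter.1 hμ
    refine mem_xnFinset.2 (isXn_of_isXn_add_single (f := f) (lam := Multiset.replicate j i) ?_)
    rw [hblock hcount, Multiset.sum_replicate, smul_eq_mul, mul_comm j i]
    exact mem_xnFinset.1 hμ
  · rw [← hblock (Finset.mem_filter.1 hμ).2, ← hblock (Finset.mem_filter.1 hν).2]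
    exact congrArg (· + block) h

end Finiteness

section OneParts

variable {F : Type*} [Field F]

open scoped Classical in
/-- The function whose value at `f` is the partition `(1, …, 1)`, with as many parts as
`f` has copies in `s`. -/
noncomputable def ofOneParts (s : Multiset F[X]) : F[X] →₀ Multiset ℕ :=
  (Multiset.toFinsupp s).mapRange (fun c => Multiset.replicate c 1) (Multiset.replicate_zero 1)

/-- The polynomials `f`, each repeated as often as `1` is a part of `μ(f)`. -/
noncomputable def oneParts (μ : F[X] →₀ Multiset ℕ) : Multiset F[X] :=
  Finsupp.toMultiset (μ.mapRange (fun lam => lam.count 1) (Multiset.count_zero 1))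

/-- `μ` with all parts equal to `1` removed. -/
noncomputable def dropOneParts (μ : F[X] →₀ Multiset ℕ) : F[X] →₀ Multiset ℕ :=
  μ.mapRange (fun lam => lam.filter (· ≠ 1)) (Multiset.filter_zero _)

lemma dropOneParts_apply (μ : F[X] →₀ Multiset ℕ) (f : F[X]) :
    dropOneParts μ f = (μ f).filter (· ≠ 1) := rfl

open scoped Classical in
lemma ofOneParts_apply (s : Multiset F[X]) (f : F[X]) :
    ofOneParts s f = Multiset.replicate (s.count f) 1 := rfl

open scoped Classical in
lemma count_oneParts (μ : F[X] →₀ Multiset ℕ) (f : F[X]) :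
    (oneParts μ).count f = (μ f).count 1 := by
  rw [oneParts, Finsupp.count_toMultiset, Finsupp.mapRange_apply]

lemma dropOneParts_add_ofOneParts (μ : F[X] →₀ Multiset ℕ) :
    dropOneParts μ + ofOneParts (oneParts μ) = μ := by
  ext f : 1
  rw [Finsupp.add_apply, dropOneParts_apply, ofOneParts_apply, count_oneParts,
    ← Multiset.filter_eq', add_comm]
  exact Multiset.filter_add_not _ _

lemma oneParts_dropOneParts_add (μ : F[X] →₀ Multiset ℕ) (s : Multiset F[X]) :
    oneParts (dropOneParts μ + ofOneParts s) = s := by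
  classical
  ext f
  simp [count_oneParts, dropOneParts_apply, ofOneParts_apply]

lemma dropOneParts_dropOneParts_add (μ : F[X] →₀ Multiset ℕ) (s : Multiset F[X]) :
    dropOneParts (dropOneParts μ + ofOneParts s) = dropOneParts μ := by
  ext f : 1
  simp [dropOneParts_apply, ofOneParts_apply, Multiset.filter_eq_nil, Multiset.mem_replicate]

lemma weight_ofOneParts (s : Multiset F[X]) : weight (ofOneParts s) = (s.map natDegree).sum := by
  classical
  rw [weight, ofOneParts, Finsupp.sum_mapRange_index (by simp), Finset.sum_multiset_map_count]
  simp [Finsupp.sum]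

lemma inPhi_of_mem_oneParts {n : ℕ} {μ : F[X] →₀ Multiset ℕ} (hμ : IsXn F n μ) {f : F[X]}
    (hf : f ∈ oneParts μ) : InPhi f := by
  classical
  refine hμ.1 f (Finsupp.mem_support_iff.2 fun h => ?_)
  rw [← Multiset.count_pos, count_oneParts, h, Multiset.count_zero] at hf
  exact hf.false

lemma isXn_dropOneParts_add_ofOneParts {n : ℕ} {μ : F[X] →₀ Multiset ℕ} (hμ : IsXn F n μ)
    {s : Multiset F[X]} (hs : ∀ f ∈ s, InPhi f) :
    IsXn F (weight (dropOneParts μ) + (s.map natDegree).sum) (dropOneParts μ + ofOneParts s) := by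
  classical
  refine isXn_iff.2 ⟨fun f hf => ?_, fun f m hm => ?_, ?_⟩
  · by_cases hfs : f ∈ s
    · exact hs f hfs
    · refine hμ.1 f (Finsupp.mem_support_iff.2 fun h => Finsupp.mem_support_iff.1 hf ?_)
      simp [dropOneParts_apply, ofOneParts_apply, h, Multiset.count_eq_zero_of_notMem hfs]
  · rcases Multiset.mem_add.1 hm with hm | hm
    · exact hμ.2.1 f m (Multiset.mem_of_mem_filter hm)
    · exact (Multiset.eq_of_mem_replicate hm).symm ▸ one_pos
  · rw [weight_add, weight_ofOneParts]

lemma monic_prod_oneParts {n : ℕ} {μ : F[X] →₀ Multiset ℕ} (hμ : IsXn F n μ) :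
    (oneParts μ).prod.Monic := by
  simpa using monic_multiset_prod_of_monic (oneParts μ) id fun f hf =>
    (inPhi_of_mem_oneParts hμ hf).1

lemma weight_dropOneParts_add_natDegree {n : ℕ} {μ : F[X] →₀ Multiset ℕ} (hμ : IsXn F n μ) :
    weight (dropOneParts μ) + (oneParts μ).prod.natDegree = n := by
  rw [natDegree_multiset_prod_of_monic _ fun f hf => (inPhi_of_mem_oneParts hμ hf).1,
    ← weight_ofOneParts, ← weight_add, dropOneParts_add_ofOneParts]
  exact hμ.2.2

end OneParts

section AppendCoeffs

variable {F : Type*} [Field F]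

/-- The polynomial obtained from `g` by appending the coefficients of `X * p + 1` below those
of `g`. The constant term `1` keeps `X` from being a factor. -/
noncomputable def appendCoeffs (m : ℕ) (g p : F[X]) : F[X] := X ^ (m + 1) * g + (X * p + 1)

variable {m : ℕ} {g p : F[X]}

lemma degree_X_mul_add_one_lt (hp : p.degree < m) :
    (X * p + 1 : F[X]).degree < (m + 1 : ℕ) := by
  rw [degree_lt_iff_coeff_zero] at hp ⊢
  rintro (_ | k) hk
  · omega
  · simpa [coeff_X_mul, coeff_one] using hp k (by omega)

lemma degree_X_mul_add_one_lt_degree (hg : g.Monic) (hp : p.degree < m) :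
    (X * p + 1 : F[X]).degree < (X ^ (m + 1) * g).degree := by
  refine (degree_X_mul_add_one_lt hp).trans_le ?_
  rw [degree_mul, degree_X_pow, degree_eq_natDegree hg.ne_zero]
  exact_mod_cast Nat.le_add_right _ _

lemma monic_appendCoeffs (hg : g.Monic) (hp : p.degree < m) : (appendCoeffs m g p).Monic :=
  ((monic_X_pow _).mul hg).add_of_left (degree_X_mul_add_one_lt_degree hg hp)

lemma natDegree_appendCoeffs (hg : g.Monic) (hp : p.degree < m) :
    (appendCoeffs m g p).natDegree = g.natDegree + (m + 1) := by
  rw [appendCoeffs, natDegree_add_eq_left_of_degree_lt (degree_X_mul_add_one_lt_degree hg hp),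
    (monic_X_pow _).natDegree_mul hg, natDegree_X_pow, add_comm]

lemma coeff_zero_appendCoeffs (m : ℕ) (g p : F[X]) : (appendCoeffs m g p).coeff 0 = 1 := by
  simp [appendCoeffs, coeff_zero_eq_eval_zero]

lemma appendCoeffs_inj {g' p' : F[X]} (hp : p.degree < m) (hp' : p'.degree < m)
    (h : appendCoeffs m g p = appendCoeffs m g' p') : g = g' ∧ p = p' := by
  have hdivision : ∀ {g p : F[X]}, p.degree < m →
      appendCoeffs m g p /ₘ X ^ (m + 1) = g ∧ appendCoeffs m g p %ₘ X ^ (m + 1) = X * p + 1 :=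
    fun {g p} hp => div_modByMonic_unique g (X * p + 1) (monic_X_pow _)
      ⟨add_comm _ _, (degree_X_pow (R := F) (m + 1)).symm ▸ degree_X_mul_add_one_lt hp⟩
  obtain ⟨hquot, hrem⟩ := hdivision (g := g) hp
  obtain ⟨hquot', hrem'⟩ := hdivision (g := g') hp'
  rw [h] at hquot hrem
  exact ⟨hquot.symm.trans hquot',
    mul_left_cancel₀ X_ne_zero (add_right_cancel (hrem.symm.trans hrem'))⟩

end AppendCoeffs

section ExtendOneParts

variable {F : Type*} [Field F] [DecidableEq F]

lemma normalizedFactors_prod_of_inPhi {s : Multiset F[X]} (hs : ∀ f ∈ s, InPhi f) :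
    normalizedFactors s.prod = s := by
  rw [normalizedFactors_prod_eq s fun f hf => (hs f hf).2.1]
  conv_rhs => rw [← Multiset.map_id s]
  exact Multiset.map_congr rfl fun f hf => (hs f hf).1.normalize_eq_self

lemma prod_normalizedFactors_of_monic {g : F[X]} (hg : g.Monic) :
    (normalizedFactors g).prod = g := by
  rw [prod_normalizedFactors_eq hg.ne_zero, hg.normalize_eq_self]

lemma inPhi_of_mem_normalizedFactors {f g : F[X]} (hg : g.coeff 0 ≠ 0)
    (hf : f ∈ normalizedFactors g) : InPhi f := by
  have hirr := irreducible_of_normalized_factor f hf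
  refine ⟨normalize_normalized_factor f hf ▸ monic_normalize hirr.ne_zero, hirr, ?_⟩
  rintro rfl
  exact hg (X_dvd_iff.1 (dvd_of_mem_normalizedFactors hf))

/-- Appending coefficients to the polynomial `∏ f` over the parts `1` of `μ`, and
recording the irreducible factors of the result as new parts `1`. -/
noncomputable def extendOneParts (m : ℕ) (μ : F[X] →₀ Multiset ℕ) (p : F[X]) :
    F[X] →₀ Multiset ℕ :=
  dropOneParts μ + ofOneParts (normalizedFactors (appendCoeffs m (oneParts μ).prod p))

variable {n m : ℕ} {μ ν : F[X] →₀ Multiset ℕ} {p : F[X]}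

lemma isXn_extendOneParts (hμ : IsXn F n μ) (hp : p.degree < m) :
    IsXn F (n + (m + 1)) (extendOneParts m μ p) := by
  have hmonic := monic_appendCoeffs (monic_prod_oneParts hμ) hp
  have hfactors : ∀ f ∈ normalizedFactors (appendCoeffs m (oneParts μ).prod p), InPhi f :=
    fun f => inPhi_of_mem_normalizedFactors (by simp [coeff_zero_appendCoeffs])
  have hdegree : ((normalizedFactors (appendCoeffs m (oneParts μ).prod p)).map natDegree).sum =
      (oneParts μ).prod.natDegree + (m + 1) := by
    rw [← natDegree_multiset_prod_of_monic _ fun f hf => (hfactors f hf).1,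
      prod_normalizedFactors_of_monic hmonic, natDegree_appendCoeffs (monic_prod_oneParts hμ) hp]
  have hX := isXn_dropOneParts_add_ofOneParts hμ hfactors
  rwa [hdegree, ← add_assoc, weight_dropOneParts_add_natDegree hμ] at hX

lemma extendOneParts_inj {p' : F[X]} (hμ : IsXn F n μ) (hν : IsXn F n ν) (hp : p.degree < m)
    (hp' : p'.degree < m) (h : extendOneParts m μ p = extendOneParts m ν p') :
    μ = ν ∧ p = p' := by
  have hdrop : dropOneParts μ = dropOneParts ν := by
    simpa only [extendOneParts, dropOneParts_dropOneParts_add] using congrArg dropOneParts h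
  have hfactors : normalizedFactors (appendCoeffs m (oneParts μ).prod p) =
      normalizedFactors (appendCoeffs m (oneParts ν).prod p') := by
    simpa only [extendOneParts, oneParts_dropOneParts_add] using congrArg oneParts h
  have happend : appendCoeffs m (oneParts μ).prod p = appendCoeffs m (oneParts ν).prod p' := by
    rw [← prod_normalizedFactors_of_monic (monic_appendCoeffs (monic_prod_oneParts hμ) hp),
      hfactors, prod_normalizedFactors_of_monic (monic_appendCoeffs (monic_prod_oneParts hν) hp')]
  obtain ⟨hprod, rfl⟩ := appendCoeffs_inj hp hp' happend
  have hone : oneParts μ = oneParts ν := by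
    rw [← normalizedFactors_prod_of_inPhi fun _ => inPhi_of_mem_oneParts hμ, hprod,
      normalizedFactors_prod_of_inPhi fun _ => inPhi_of_mem_oneParts hν]
  refine ⟨?_, rfl⟩
  rw [← dropOneParts_add_ofOneParts μ, hdrop, hone, dropOneParts_add_ofOneParts]

end ExtendOneParts

section Growth

variable {F : Type*} [Field F] [Fintype F]

lemma card_xnFinset_mul_pow_le (n m : ℕ) :
    #(xnFinset F n) * Fintype.card F ^ m ≤ #(xnFinset F (n + (m + 1))) := by
  classical
  have := finite_degreeLT (F := F) m
  have hcard : Nat.card (xnFinset F n × degreeLT F m) =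
      #(xnFinset F n) * Fintype.card F ^ m := by
    rw [Nat.card_prod, Nat.card_congr (degreeLTEquiv F m).toEquiv]
    simp
  rw [← hcard, ← Nat.card_eq_finsetCard]
  refine Nat.card_le_card_of_injective
    (fun x => ⟨extendOneParts m x.1 x.2, mem_xnFinset.2 <|
      isXn_extendOneParts (mem_xnFinset.1 x.1.2) (mem_degreeLT.1 x.2.2)⟩) ?_
  rintro ⟨⟨μ, hμ⟩, p, hp⟩ ⟨⟨ν, hν⟩, p', hp'⟩ h
  obtain ⟨rfl, rfl⟩ := extendOneParts_inj (mem_xnFinset.1 hμ) (mem_xnFinset.1 hν)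
    (mem_degreeLT.1 hp) (mem_degreeLT.1 hp') (congrArg Subtype.val h)
  rfl

lemma card_filter_le_count_mul_pow_le {i j : ℕ} {f : F[X]} (hpos : 0 < i * j * f.natDegree)
    (n : ℕ) :
    #{μ ∈ xnFinset F n | j ≤ (μ f).count i} * Fintype.card F ^ (i * j * f.natDegree) ≤
      Fintype.card F * #(xnFinset F n) := by
  rcases lt_or_ge n (i * j * f.natDegree) with hn | hn
  · have hempty : {μ ∈ xnFinset F n | j ≤ (μ f).count i} = ∅ := by
      refine Finset.filter_eq_empty_iff.2 fun μ hμ hcount => hn.not_ge ?_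
      calc i * j * f.natDegree ≤ (μ f).sum * f.natDegree :=
            Nat.mul_le_mul_right _ (mul_le_sum_of_le_count hcount)
        _ ≤ n := sum_mul_natDegree_le (mem_xnFinset.1 hμ) f
    simp [hempty]
  · obtain ⟨r, rfl⟩ := Nat.exists_eq_add_of_le' hn
    obtain ⟨m, hm⟩ := Nat.exists_eq_add_of_le' hpos
    calc _ ≤ #(xnFinset F r) * Fintype.card F ^ (i * j * f.natDegree) :=
          Nat.mul_le_mul_right _ (card_filter_le_count_le r i j f)
      _ = Fintype.card F * (#(xnFinset F r) * Fintype.card F ^ m) := by rw [hm, pow_succ]; ring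
      _ ≤ _ := by
          rw [hm]
          exact Nat.mul_le_mul_left _ (card_xnFinset_mul_pow_le r m)

end Growth

section FirstMoment

lemma sum_eq_sum_sum_ite {lam : Multiset ℕ} {n : ℕ} (hpos : ∀ m ∈ lam, 0 < m)
    (hn : lam.sum ≤ n) :
    lam.sum = ∑ i ∈ Icc 1 n, ∑ j ∈ Icc 1 n, if j ≤ lam.count i then i else 0 := by
  have hsub : lam.toFinset ⊆ Icc 1 n := fun m hm => by
    rw [Multiset.mem_toFinset] at hm
    exact mem_Icc.2 ⟨hpos m hm, (Multiset.single_le_sum (fun _ _ => Nat.zero_le _) m hm).trans hn⟩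
  rw [Finset.sum_multiset_count_of_subset lam _ hsub]
  refine sum_congr rfl fun i _ => ?_
  have hcount : lam.count i ≤ n :=
    (Multiset.count_le_card _ _).trans ((card_le_sum_of_pos hpos).trans hn)
  have hIcc : {j ∈ Icc 1 n | j ≤ lam.count i} = Icc 1 (lam.count i) := by
    ext j
    simp only [mem_filter, mem_Icc]
    omega
  rw [← sum_filter, hIcc, sum_const, Nat.card_Icc, Nat.add_sub_cancel]

lemma pow_mul_two_pow_le {q i j d : ℕ} (hq : 2 ≤ q) (hi : 0 < i) (hj : 0 < j) (hd : 0 < d) :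
    q ^ d * 2 ^ i * 2 ^ j ≤ 4 * q ^ (i * j * d) := by
  obtain ⟨a, rfl⟩ := Nat.exists_eq_add_of_le' hi
  obtain ⟨b, rfl⟩ := Nat.exists_eq_add_of_le' hj
  have hexp : d + a + b ≤ (a + 1) * (b + 1) * d := by nlinarith [Nat.zero_le (a * b * d)]
  calc q ^ d * 2 ^ (a + 1) * 2 ^ (b + 1) = 4 * (q ^ d * 2 ^ a * 2 ^ b) := by ring
    _ ≤ 4 * (q ^ d * q ^ a * q ^ b) := by gcongr
    _ = 4 * q ^ (d + a + b) := by rw [pow_add, pow_add]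
    _ ≤ 4 * q ^ ((a + 1) * (b + 1) * d) := by gcongr; omega

lemma sum_mul_one_half_pow_le (s : Finset ℕ) : ∑ i ∈ s, (i : ℝ) * (1 / 2) ^ i ≤ 2 := by
  have hsum := hasSum_coe_mul_geometric_of_norm_lt_one (𝕜 := ℝ) (r := 1 / 2) (by norm_num)
  exact (sum_le_hasSum s (fun _ _ => by positivity) hsum).trans_eq (by norm_num)

lemma sum_one_half_pow_le (s : Finset ℕ) : ∑ j ∈ s, ((1 : ℝ) / 2) ^ j ≤ 2 :=
  sum_le_hasSum s (fun _ _ => by positivity) hasSum_geometric_two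

variable {F : Type*} [Field F] [Fintype F]

lemma card_filter_le_count_le_mul {i j : ℕ} {f : F[X]} (hi : 0 < i) (hj : 0 < j)
    (hf : 0 < f.natDegree) (n : ℕ) :
    (#{μ ∈ xnFinset F n | j ≤ (μ f).count i} : ℝ) ≤
      4 * (Fintype.card F * ((Fintype.card F : ℝ) ^ f.natDegree)⁻¹ * #(xnFinset F n)) *
        ((1 / 2) ^ i * (1 / 2) ^ j) := by
  have hq : 2 ≤ Fintype.card F := Fintype.one_lt_card
  have : (0 : ℝ) < Fintype.card F := by positivity
  have hcount := card_filter_le_count_mul_pow_le (i := i) (j := j) (f := f) (by positivity) n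
  set N := #{μ ∈ xnFinset F n | j ≤ (μ f).count i}
  have hbound : N * (Fintype.card F ^ f.natDegree * 2 ^ i * 2 ^ j) ≤
      4 * (Fintype.card F * #(xnFinset F n)) :=
    calc _ ≤ N * (4 * Fintype.card F ^ (i * j * f.natDegree)) :=
          Nat.mul_le_mul_left _ (pow_mul_two_pow_le hq hi hj hf)
      _ = 4 * (N * Fintype.card F ^ (i * j * f.natDegree)) := by ring
      _ ≤ _ := Nat.mul_le_mul_left _ hcount
  rify at hbound
  rw [← le_div_iff₀ (by positivity)] at hbound
  refine hbound.trans_eq ?_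
  rw [one_div_pow, one_div_pow]
  field_simp

lemma sum_sum_apply_le {f : F[X]} (hf : 0 < f.natDegree) (n : ℕ) :
    ∑ μ ∈ xnFinset F n, ((μ f).sum : ℝ) ≤
      16 * Fintype.card F * ((Fintype.card F : ℝ) ^ f.natDegree)⁻¹ * #(xnFinset F n) := by
  set c := (Fintype.card F : ℝ) * ((Fintype.card F : ℝ) ^ f.natDegree)⁻¹ * #(xnFinset F n)
    with hc
  have hexpand : ∑ μ ∈ xnFinset F n, (μ f).sum =
      ∑ i ∈ Icc 1 n, ∑ j ∈ Icc 1 n, i * #{μ ∈ xnFinset F n | j ≤ (μ f).count i} := by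
    rw [sum_congr rfl fun μ hμ => sum_eq_sum_sum_ite ((mem_xnFinset.1 hμ).2.1 f)
      (sum_le_of_natDegree_pos (mem_xnFinset.1 hμ) hf), sum_comm]
    refine sum_congr rfl fun i _ => ?_
    rw [sum_comm]
    refine sum_congr rfl fun j _ => ?_
    rw [← sum_filter, sum_const, smul_eq_mul, mul_comm]
  calc ∑ μ ∈ xnFinset F n, ((μ f).sum : ℝ)
      = ∑ i ∈ Icc 1 n, ∑ j ∈ Icc 1 n, (i : ℝ) * #{μ ∈ xnFinset F n | j ≤ (μ f).count i} := by
        exact_mod_cast hexpand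
    _ ≤ ∑ i ∈ Icc 1 n, ∑ j ∈ Icc 1 n, (i : ℝ) * (4 * c * ((1 / 2) ^ i * (1 / 2) ^ j)) := by
        gcongr with i hi j hj
        exact card_filter_le_count_le_mul (mem_Icc.1 hi).1 (mem_Icc.1 hj).1 hf n
    _ = 4 * c * ((∑ i ∈ Icc 1 n, (i : ℝ) * (1 / 2) ^ i) * ∑ j ∈ Icc 1 n, (1 / 2) ^ j) := by
        rw [sum_mul_sum, mul_sum]
        simp only [mul_sum]
        exact sum_congr rfl fun i _ => sum_congr rfl fun j _ => by ring
    _ ≤ 4 * c * (2 * 2) := by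
        gcongr
        · exact sum_mul_one_half_pow_le _
        · exact sum_one_half_pow_le _
    _ = _ := by rw [hc]; ring

lemma mul_card_le_card_pow {d : ℕ} (hd : d ≠ 0) {s : Finset F[X]}
    (hs : ∀ f ∈ s, f.Monic ∧ Irreducible f ∧ f.natDegree = d) :
    d * #s ≤ Fintype.card F ^ d := by
  have hcoprime : (s : Set F[X]).Pairwise (Function.onFun IsCoprime id) := fun f hf g hg hfg =>
    (hs f hf).2.1.coprime_iff_not_dvd.2 fun hdvd => hfg <|
      eq_of_monic_of_associated (hs f hf).1 (hs g hg).1 <|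
        (hs f hf).2.1.associated_of_dvd (hs g hg).2.1 hdvd
  have hdvd : ∏ f ∈ s, f ∣ X ^ Fintype.card F ^ d - X :=
    Finset.prod_dvd_of_coprime hcoprime fun f hf => by
      rw [← Nat.card_eq_fintype_card]
      exact ((hs f hf).2.1.natDegree_dvd_iff_dvd_X_pow_card_pow_sub_X).1 (hs f hf).2.2.dvd
  calc d * #s = ∑ f ∈ s, f.natDegree := by
        rw [sum_congr rfl fun f hf => (hs f hf).2.2, sum_const, smul_eq_mul, mul_comm]
    _ = (∏ f ∈ s, f).natDegree := (natDegree_prod_of_monic _ _ fun f hf => (hs f hf).1).symm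
    _ ≤ (X ^ Fintype.card F ^ d - X : F[X]).natDegree := natDegree_le_of_dvd hdvd <|
        FiniteField.X_pow_card_pow_sub_X_ne_zero F hd Fintype.one_lt_card
    _ = Fintype.card F ^ d :=
        FiniteField.X_pow_card_pow_sub_X_natDegree_eq F hd Fintype.one_lt_card

lemma sum_inv_card_pow_natDegree_le {n : ℕ} {s : Finset F[X]}
    (hs : ∀ f ∈ s, f.Monic ∧ Irreducible f ∧ f.natDegree ∈ Icc 1 n) :
    ∑ f ∈ s, ((Fintype.card F : ℝ) ^ f.natDegree)⁻¹ ≤ 1 + Real.log n := by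
  refine le_trans ?_ (harmonic_le_one_add_log n)
  rw [← sum_fiberwise_of_maps_to' (fun f hf => (hs f hf).2.2)
    fun d => ((Fintype.card F : ℝ) ^ d)⁻¹, harmonic_eq_sum_Icc, Rat.cast_sum]
  refine sum_le_sum fun d hd => ?_
  have hd0 : 0 < d := (mem_Icc.1 hd).1
  have hcard : (d : ℝ) * #{f ∈ s | f.natDegree = d} ≤ (Fintype.card F : ℝ) ^ d := by
    exact_mod_cast mul_card_le_card_pow hd0.ne' fun f hf =>
      let ⟨hfs, hfd⟩ := mem_filter.1 hf
      ⟨(hs f hfs).1, (hs f hfs).2.1, hfd⟩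
  have : (0 : ℝ) < Fintype.card F := by exact_mod_cast Fintype.card_pos
  rw [sum_const, nsmul_eq_mul, Rat.cast_inv, Rat.cast_natCast, ← div_eq_mul_inv,
    div_le_iff₀ (by positivity), inv_mul_eq_div, le_div_iff₀ (by positivity), mul_comm]
  exact hcard

variable (F) in
lemma sum_totalSize_le (n : ℕ) :
    ∑ μ ∈ xnFinset F n, (totalSize μ : ℝ) ≤
      16 * Fintype.card F * (1 + Real.log n) * #(xnFinset F n) := by
  classical
  let s : Finset F[X] := (xnFinset F n).biUnion Finsupp.support
  have hs : ∀ f ∈ s, f.Monic ∧ Irreducible f ∧ f.natDegree ∈ Icc 1 n := fun f hf => by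
    obtain ⟨μ, hμ, hfμ⟩ := mem_biUnion.1 hf
    have hμ := mem_xnFinset.1 hμ
    exact ⟨(hμ.1 f hfμ).1, (hμ.1 f hfμ).2.1, natDegree_mem_Icc hμ hfμ⟩
  have htotal : ∀ μ ∈ xnFinset F n, (totalSize μ : ℝ) = ∑ f ∈ s, ((μ f).sum : ℝ) := fun μ hμ => by
    rw [totalSize, Nat.cast_sum]
    refine sum_subset (subset_biUnion_of_mem Finsupp.support hμ) fun f _ hf => ?_
    simp [Finsupp.notMem_support_iff.1 hf]
  calc ∑ μ ∈ xnFinset F n, (totalSize μ : ℝ)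
      = ∑ f ∈ s, ∑ μ ∈ xnFinset F n, ((μ f).sum : ℝ) := by rw [sum_congr rfl htotal, sum_comm]
    _ ≤ ∑ f ∈ s, 16 * Fintype.card F * ((Fintype.card F : ℝ) ^ f.natDegree)⁻¹ *
          #(xnFinset F n) :=
        sum_le_sum fun f hf => sum_sum_apply_le (mem_Icc.1 (hs f hf).2.2).1 n
    _ = 16 * Fintype.card F * (∑ f ∈ s, ((Fintype.card F : ℝ) ^ f.natDegree)⁻¹) *
          #(xnFinset F n) := by rw [mul_sum, sum_mul]
    _ ≤ _ := by
        gcongr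
        exact sum_inv_card_pow_natDegree_le hs

end FirstMoment

section Asymptotics

open Filter Asymptotics

lemma natLog_le_log_div_log (b n : ℕ) : (Nat.log b n : ℝ) ≤ Real.log n / Real.log b :=
  Real.natLog_le_logb n b

lemma isBigO_natLog_log (b : ℕ) :
    (fun n : ℕ => (Nat.log b n : ℝ)) =O[atTop] fun n : ℕ => Real.log n := by
  refine IsBigO.of_bound (Real.log b)⁻¹ (Eventually.of_forall fun n => ?_)
  rw [Real.norm_of_nonneg (Nat.cast_nonneg _), Real.norm_of_nonneg (Real.log_natCast_nonneg n),
    inv_mul_eq_div]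
  exact natLog_le_log_div_log b n

lemma isBigO_const_log (c : ℝ) : (fun _ : ℕ => c) =O[atTop] fun n : ℕ => Real.log n :=
  (Real.isLittleO_const_log_atTop (c := c)).natCast_atTop.isBigO

lemma tendsto_add_natLog_mul_one_add_log_div (b : ℕ) (c : ℝ) :
    Tendsto (fun n : ℕ => (c + Nat.log b n) * (1 + Real.log n) / n) atTop (nhds 0) := by
  have hsq : (fun n : ℕ => Real.log n ^ 2) =o[atTop] fun n : ℕ => (n : ℝ) :=
    Real.isLittleO_pow_log_id_atTop.natCast_atTop
  have hprod : (fun n : ℕ => (c + Nat.log b n) * (1 + Real.log n)) =O[atTop]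
      fun n : ℕ => Real.log n ^ 2 := by
    simp only [pow_two]
    exact ((isBigO_const_log c).add (isBigO_natLog_log b)).mul
      ((isBigO_const_log 1).add (isBigO_refl _ _))
  exact (hprod.trans_isLittleO hsq).tendsto_div_nhds_zero

lemma isLittleO_padicValNat_descFactorial (ℓ k : ℕ) :
    (fun n : ℕ => (padicValNat ℓ (n.descFactorial k) : ℝ)) =o[atTop] fun n : ℕ => (n : ℝ) := by
  have hlog : (fun n : ℕ => Real.log n) =o[atTop] fun n : ℕ => (n : ℝ) :=
    Real.isLittleO_log_id_atTop.natCast_atTop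
  refine IsBigO.trans_isLittleO (IsBigO.of_bound (k / Real.log ℓ) ?_) hlog
  refine Eventually.of_forall fun n => ?_
  rw [Real.norm_of_nonneg (Nat.cast_nonneg _), Real.norm_of_nonneg (Real.log_natCast_nonneg n)]
  calc (padicValNat ℓ (n.descFactorial k) : ℝ)
      ≤ (Nat.log ℓ (n ^ k) : ℝ) := by
        exact_mod_cast (padicValNat_le_nat_log _).trans
          (Nat.log_mono_right (Nat.descFactorial_le_pow n k))
    _ ≤ Real.log (n ^ k : ℕ) / Real.log ℓ := natLog_le_log_div_log _ _
    _ = k / Real.log ℓ * Real.log n := by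
        rw [Nat.cast_pow, Real.log_pow]
        ring

lemma eventually_half_div_le_div_sub {e : ℕ} (he : 0 < e) {t : ℕ → ℝ}
    (ht : t =o[atTop] fun n : ℕ => (n : ℝ)) :
    ∀ᶠ n : ℕ in atTop, (n : ℝ) / (2 * e) ≤ (n / e : ℕ) - t n := by
  have : (0 : ℝ) < e := Nat.cast_pos.2 he
  filter_upwards [ht.bound (c := 1 / (4 * e)) (by positivity), eventually_ge_atTop (4 * e)]
    with n hsmall hlarge
  have hfloor : (n : ℝ) / e - 1 ≤ (n / e : ℕ) := by
    rw [← Nat.floor_div_eq_div (K := ℝ)]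
    exact (Nat.sub_one_lt_floor _).le
  have ht_le : t n ≤ n / e / 4 := by
    rw [Real.norm_natCast] at hsmall
    exact (le_abs_self _).trans (hsmall.trans_eq (by field_simp))
  have hone : 1 ≤ (n : ℝ) / e / 4 := by
    rw [div_div, le_div_iff₀ (by positivity), one_mul, mul_comm]
    exact_mod_cast hlarge
  have hhalf : (n : ℝ) / (2 * e) = n / e / 2 := by field_simp
  linarith

end Asymptotics

section Proportion

open Filter Asymptotics

open scoped Classical in
lemma natCard_isXn_and {F : Type*} [Field F] [Finite F] (n : ℕ)
    (P : (F[X] →₀ Multiset ℕ) → Prop) :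
    Nat.card {μ // IsXn F n μ ∧ P μ} = #{μ ∈ xnFinset F n | P μ} :=
  Nat.subtype_card _ fun μ => by rw [mem_filter, mem_xnFinset]

lemma natCard_isXn {F : Type*} [Field F] [Finite F] (n : ℕ) :
    Nat.card {μ // IsXn F n μ} = #(xnFinset F n) :=
  Nat.subtype_card _ fun _ => mem_xnFinset

variable {F : Type*} [Field F] [Fintype F] {ℓ : ℕ} [hℓ : Fact ℓ.Prime]

open scoped Classical in
lemma card_filter_padicValRat_lt_mul_le (hℓF : ¬ ℓ ∣ Fintype.card F) (n : ℕ) (t : ℝ) :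
    #{μ ∈ xnFinset F n | (padicValRat ℓ (dMu (Fintype.card F) n μ) : ℝ) < t} *
        (((n / (ℓ - 1) : ℕ) : ℝ) - t) ≤
      16 * Fintype.card F * #(xnFinset F n) *
        ((padicValNat ℓ (Fintype.card F ^ (2 * (ℓ - 1)) - 1) + Nat.log ℓ n) *
          (1 + Real.log n)) := by
  set c : ℝ := padicValNat ℓ (Fintype.card F ^ (2 * (ℓ - 1)) - 1) + Nat.log ℓ n with hc
  have hlow : ∀ μ ∈ {μ ∈ xnFinset F n | (padicValRat ℓ (dMu (Fintype.card F) n μ) : ℝ) < t},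
      ((n / (ℓ - 1) : ℕ) : ℝ) - t ≤ totalSize μ * c := fun μ hμ => by
    obtain ⟨hμ, hval⟩ := mem_filter.1 hμ
    have hlower := sub_le_padicValRat_dMu (ℓ := ℓ) Fintype.one_lt_card hℓF (mem_xnFinset.1 hμ)
    have hlower' : ((n / (ℓ - 1) : ℕ) : ℝ) - totalSize μ * c ≤
        padicValRat ℓ (dMu (Fintype.card F) n μ) := by
      rw [hc]
      exact_mod_cast hlower
    linarith
  calc _ ≤ ∑ μ ∈ xnFinset F n with (padicValRat ℓ (dMu (Fintype.card F) n μ) : ℝ) < t,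
          totalSize μ * c := by
        rw [← nsmul_eq_mul]
        exact card_nsmul_le_sum _ _ _ hlow
    _ ≤ ∑ μ ∈ xnFinset F n, totalSize μ * c :=
        sum_le_sum_of_subset_of_nonneg (filter_subset _ _) fun _ _ _ => by positivity
    _ = (∑ μ ∈ xnFinset F n, (totalSize μ : ℝ)) * c := (sum_mul ..).symm
    _ ≤ 16 * Fintype.card F * (1 + Real.log n) * #(xnFinset F n) * c := by
        gcongr
        exact sum_totalSize_le F n
    _ = _ := by ring

open scoped Classical in
lemma card_filter_padicValRat_lt_div_le (hℓF : ¬ ℓ ∣ Fintype.card F) {n : ℕ} (hn : 0 < n) {t : ℝ}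
    (hgap : (n : ℝ) / (2 * (ℓ - 1 : ℕ)) ≤ (n / (ℓ - 1) : ℕ) - t) :
    (#{μ ∈ xnFinset F n | (padicValRat ℓ (dMu (Fintype.card F) n μ) : ℝ) < t} : ℝ) /
        #(xnFinset F n) ≤
      32 * (Fintype.card F : ℝ) * (ℓ - 1 : ℕ) *
        ((padicValNat ℓ (Fintype.card F ^ (2 * (ℓ - 1)) - 1) + Nat.log ℓ n) *
          (1 + Real.log n) / n) := by
  have : (0 : ℝ) < n := Nat.cast_pos.2 hn
  have hℓ1 : (0 : ℝ) < (ℓ - 1 : ℕ) := Nat.cast_pos.2 (Nat.sub_pos_of_lt hℓ.out.one_lt)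
  have := Real.log_natCast_nonneg n
  have hmarkov := (mul_le_mul_of_nonneg_left hgap (Nat.cast_nonneg _)).trans
    (card_filter_padicValRat_lt_mul_le (ℓ := ℓ) hℓF n t)
  refine div_le_of_le_mul₀ (Nat.cast_nonneg _) (by positivity) ?_
  rw [← le_div_iff₀ (by positivity)] at hmarkov
  refine hmarkov.trans_eq ?_
  field_simp
  ring

theorem two_adic_proportion_of_low_valuation_general (hℓF : ¬ ℓ ∣ Fintype.card F) {t : ℕ → ℝ}
    (ht : t =o[atTop] fun n : ℕ => (n : ℝ)) :
    Tendsto (fun n : ℕ =>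
      (Nat.card {μ : F[X] →₀ Multiset ℕ //
          IsXn F n μ ∧ (padicValRat ℓ (dMu (Fintype.card F) n μ) : ℝ) < t n} : ℝ) /
        Nat.card {μ : F[X] →₀ Multiset ℕ // IsXn F n μ}) atTop (nhds 0) := by
  classical
  have hlimit := (tendsto_add_natLog_mul_one_add_log_div ℓ
    (padicValNat ℓ (Fintype.card F ^ (2 * (ℓ - 1)) - 1))).const_mul
      (32 * (Fintype.card F : ℝ) * (ℓ - 1 : ℕ))
  rw [mul_zero] at hlimit
  refine squeeze_zero' (Eventually.of_forall fun n => by positivity) ?_ hlimit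
  filter_upwards [eventually_half_div_le_div_sub (Nat.sub_pos_of_lt hℓ.out.one_lt) ht,
    eventually_gt_atTop 0] with n hgap hn
  rw [natCard_isXn_and, natCard_isXn]
  exact card_filter_padicValRat_lt_div_le hℓF hn hgap

end Proportion

theorem two_adic_proportion_of_low_valuation
    (q : ℕ) (hq : IsPrimePow q) (hodd : Odd q)
    (F : Type*) [Field F] [Fintype F] (hFq : Fintype.card F = q)
    (k : ℕ) (hk : 0 < k) :
    ∀ ε : ℝ, 0 < ε → ∃ N : ℕ, ∀ n ≥ N,
      (Nat.card {μ : Polynomial F →₀ Multiset ℕ //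
            IsXn F n μ ∧
              padicValRat 2 (dMu q n μ) < (padicValNat 2 (Nat.descFactorial n k) : ℤ)} : ℝ) /
          (Nat.card {μ : Polynomial F →₀ Multiset ℕ // IsXn F n μ} : ℝ) < ε := by
  intro ε hε
  subst hFq
  have hlimit := two_adic_proportion_of_low_valuation_general (F := F) hodd.not_two_dvd_nat
    (isLittleO_padicValNat_descFactorial 2 k)
  simpa only [Filter.eventually_atTop, ← Int.cast_natCast (R := ℝ), Int.cast_lt] using
    hlimit.eventually_lt_const hε
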